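/- Let p be a prime, q = 1/p, let μ ≥ 2 be an integer, and let n ≥ 3 be an odd integer. Then P(n, p^μ) = (1 − q^n)·P(n−2, p^μ) + q^n·P(n, p^{μ−2}). (When μ = 2 the last term vanishes automatically, since P(n, p^0) = P(n, 1) = 0.) -/

import Mathlib

/-- Number of symmetric `n × n` matrices over `ZMod m` with nonzero determinant. -/
noncomputable def Nsym (n m : ℕ) : ℕ :=
  Nat.card {A : Matrix (Fin n) (Fin n) (ZMod m) // A.IsSymm ∧ A.det ≠ 0}

/-- Proportion of symmetric `n × n` matrices over `ZMod m` with nonzero determinant. -/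
noncomputable def Psym (n m : ℕ) : ℝ :=
  (Nsym n m : ℝ) / (m : ℝ) ^ (n * (n + 1) / 2)

/-!
Replace `ℤ/p^μ` by a finite local ring `R` whose maximal ideal is generated by `π`, with residue
field of cardinality `1/q`, and consider the probability `P n m` that `π ^ m` does not divide the
determinant of a random symmetric `n × n` matrix; for `R = ℤ/p^μ`, `π = p` and `m ≤ μ`, reduction
modulo `p^m` identifies it with `P(n, p^m)`. If the corner entry is a unit, or if the border of a
nonunit corner has a unit entry, the Schur complement of an invertible block of size one or two is a
translate of a uniformly random symmetric matrix, hence again uniform. Otherwise the whole first row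
is divisible by `π`, and pulling this factor out of the row, and then possibly out of the column,
lowers `m`. This gives
`P (n+1) m = (1-q) P n m + q (1-q^n) P (n-1) m + q^(n+1) (1-q) P n (m-1) + q^(n+2) P (n+1) (m-2)`,
and eliminating the even sizes by induction leaves a three-term recurrence for the odd ones.
-/

open Finset IsLocalRing Matrix
open scoped BigOperators

section UniformAverage

variable {G H : Type*} [AddCommGroup G] [AddCommGroup H] [Fintype G] [Fintype H]

theorem expect_comp_addMonoidHom_of_surjective (φ : G →+ H) (hφ : Function.Surjective φ)
    (f : H → ℝ) : 𝔼 g, f (φ g) = 𝔼 h, f h := by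
  have translate (h : H) : 𝔼 g, f (φ g + h) = 𝔼 g, f (φ g) := by
    obtain ⟨g₀, rfl⟩ := hφ h
    exact Fintype.expect_equiv (Equiv.addRight g₀) _ _ fun g => by simp
  calc 𝔼 g, f (φ g) = 𝔼 h, 𝔼 g, f (φ g + h) := by simp only [translate, Fintype.expect_const]
    _ = 𝔼 g, 𝔼 h, f (φ g + h) := expect_comm _ _ _
    _ = 𝔼 _g : G, 𝔼 h, f h :=
      expect_congr rfl fun g _ => Fintype.expect_equiv (Equiv.addLeft (φ g)) _ _ fun _ => rfl
    _ = 𝔼 h, f h := Fintype.expect_const _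

theorem expect_eq_of_const_off_addSubgroup (S : AddSubgroup H) [Fintype S] (f : H → ℝ) (s : ℝ)
    (hf : ∀ h ∉ S, f h = s) :
    𝔼 h, f h = (1 - 1 / S.index) * s + 1 / S.index * 𝔼 h : S, f h := by
  classical
  have hS : (Fintype.card S : ℝ) ≠ 0 := by simp
  have hi : (S.index : ℝ) ≠ 0 := by exact_mod_cast S.index_ne_zero_of_finite
  have hcard : (Fintype.card H : ℝ) = Fintype.card S * S.index := by
    exact_mod_cast (by simpa using S.card_mul_index.symm)
  have hsum : ∑ h, (f h - s) = ∑ h : S, (f h - s) := by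
    rw [← sum_subtype (univ.filter (· ∈ S)) (by simp) fun h => f h - s]
    refine (sum_filter_of_ne fun h _ hne => ?_).symm
    by_contra hmem
    exact hne (sub_eq_zero.2 (hf h hmem))
  rw [sum_sub_distrib, sum_sub_distrib] at hsum
  simp only [sum_const, card_univ, nsmul_eq_mul, hcard] at hsum
  simp only [Fintype.expect_eq_sum_div_card, hcard]
  field_simp
  linear_combination hsum

theorem expect_eq_of_const_off_range (φ : G →+ H) (f : H → ℝ) (s : ℝ)
    (hf : ∀ h ∉ φ.range, f h = s) :
    𝔼 h, f h = (1 - 1 / φ.range.index) * s + 1 / φ.range.index * 𝔼 g, f (φ g) := by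
  classical
  rw [expect_eq_of_const_off_addSubgroup φ.range f s hf,
    ← expect_comp_addMonoidHom_of_surjective φ.rangeRestrict φ.rangeRestrict_surjective
      fun h => f h]
  rfl

theorem range_compLeft {M N : Type*} [AddCommGroup M] [AddCommGroup N] (φ : M →+ N) (ι : Type*) :
    (φ.compLeft ι).range = AddSubgroup.pi Set.univ fun _ => φ.range := by
  ext v
  simp only [AddMonoidHom.mem_range, AddSubgroup.mem_pi, Set.mem_univ, true_imp_iff]
  exact ⟨fun ⟨w, hw⟩ i => ⟨w i, congrFun hw i⟩, fun h => ⟨fun i => (h i).choose,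
    funext fun i => (h i).choose_spec⟩⟩

end UniformAverage

section SymmetricMatrices

/-- The additive group of symmetric matrices, over which determinants are averaged. -/
def symmMatrices (ι R : Type*) [AddCommGroup R] : AddSubgroup (Matrix ι ι R) where
  carrier := {A | A.IsSymm}
  add_mem' := IsSymm.add
  zero_mem' := isSymm_zero
  neg_mem' := IsSymm.neg

noncomputable instance (ι R : Type*) [AddCommGroup R] [Finite ι] [Finite R] :
    Fintype (symmMatrices ι R) :=
  Fintype.ofFinite _

variable {ι κ R : Type*}

/-- Symmetric matrices as functions on unordered pairs of indices. -/
def symmMatricesEquivSym2 [AddCommGroup R] : symmMatrices ι R ≃ (Sym2 ι → R) :=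
  (Equiv.subtypeEquivRight fun _ => IsSymm.ext_iff.trans forall_comm).trans Sym2.lift

theorem card_symmMatrices_fin (n : ℕ) [AddCommGroup R] [Fintype R] :
    Fintype.card (symmMatrices (Fin n) R) = Fintype.card R ^ (n * (n + 1) / 2) := by
  rw [Fintype.card_congr symmMatricesEquivSym2, Fintype.card_fun, Sym2.card,
    Fintype.card_fin, Nat.choose_two_right, Nat.add_sub_cancel, mul_comm]

/-- The matrix with corner entry `a`, border `v` (both as row and as column) and remaining
block `B`. -/
def bordered (a : R) (v : ι → R) (B : Matrix ι ι R) : Matrix (Unit ⊕ ι) (Unit ⊕ ι) R :=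
  fromBlocks (of fun _ _ => a) (replicateRow Unit v) (replicateCol Unit v) B

theorem bordered_isSymm (a : R) (v : ι → R) {B : Matrix ι ι R} (hB : B.IsSymm) :
    (bordered a v B).IsSymm :=
  IsSymm.fromBlocks (by ext; rfl) (transpose_replicateRow v) hB

theorem bordered_submatrix (a : R) (v : ι → R) (B : Matrix κ κ R) (e : ι ≃ κ) :
    bordered a v (B.submatrix e e) =
      (bordered a (v ∘ e.symm) B).submatrix ((Equiv.refl _).sumCongr e)
        ((Equiv.refl _).sumCongr e) := by
  ext (i | i) (j | j) <;> simp [bordered]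

/-- A symmetric matrix is given by a corner entry, a border and a smaller symmetric matrix. -/
def borderedEquiv [AddCommGroup R] :
    R × (ι → R) × symmMatrices ι R ≃ symmMatrices (Unit ⊕ ι) R where
  toFun x := ⟨bordered x.1 x.2.1 x.2.2.1, bordered_isSymm _ _ x.2.2.2⟩
  invFun A := ⟨A.1 (.inl ()) (.inl ()), fun i => A.1 (.inr i) (.inl ()),
    ⟨A.1.toBlocks₂₂, A.2.submatrix Sum.inr⟩⟩
  left_inv _ := rfl
  right_inv A := by
    refine Subtype.ext (Matrix.ext ?_)
    rintro (i | i) (j | j)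
    exacts [rfl, A.2.apply _ _, rfl, rfl]

theorem expect_symmMatrices_bordered [Fintype ι] [DecidableEq ι] [AddCommGroup R] [Fintype R]
    (F : Matrix (Unit ⊕ ι) (Unit ⊕ ι) R → ℝ) :
    𝔼 A : symmMatrices (Unit ⊕ ι) R, F A =
      𝔼 a, 𝔼 v : ι → R, 𝔼 B : symmMatrices ι R, F (bordered a v B) := by
  rw [← Fintype.expect_equiv borderedEquiv _ _ fun _ => rfl, ← univ_product_univ, expect_product,
    ← univ_product_univ]
  exact expect_congr rfl fun a _ => expect_product _ _ _

/-- Renaming the indices of symmetric matrices along `e`. -/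
def symmMatricesReindex [AddCommGroup R] (e : ι ≃ κ) : symmMatrices ι R ≃ symmMatrices κ R :=
  (Matrix.reindex e e).subtypeEquiv fun _ => (isSymm_reindex_iff e).symm

theorem expect_symmMatrices_submatrix [AddCommGroup R] [Finite R] [Finite ι] [Finite κ]
    (e : κ ≃ ι) (F : Matrix κ κ R → ℝ) :
    𝔼 A : symmMatrices ι R, F (A.1.submatrix e e) = 𝔼 A : symmMatrices κ R, F A :=
  Fintype.expect_equiv (symmMatricesReindex e.symm) _ _ fun _ => rfl

theorem isSymm_transpose_mul_inv_mul [Fintype κ] [DecidableEq κ] [CommRing R] {M : Matrix κ κ R}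
    (hM : M.IsSymm) (N : Matrix κ ι R) : (Nᵀ * M⁻¹ * N).IsSymm := by
  rw [Matrix.IsSymm, transpose_mul, transpose_mul, transpose_nonsing_inv, hM.eq,
    transpose_transpose, Matrix.mul_assoc]

section Det

variable [Fintype ι] [DecidableEq ι] [CommRing R]

theorem det_bordered_mul (b a : R) (v : ι → R) (B : Matrix ι ι R) :
    (bordered (b * a) (b • v) B).det =
      b * (fromBlocks (of fun _ _ : Unit => a) (replicateRow Unit v)
        (b • replicateCol Unit v) B).det := by
  have factor : bordered (b * a) (b • v) B = fromBlocks (of fun _ _ => b) 0 0 1 *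
      fromBlocks (of fun _ _ => a) (replicateRow Unit v) (b • replicateCol Unit v) B := by
    simp only [fromBlocks_multiply, Matrix.zero_mul, Matrix.one_mul, add_zero, zero_add]
    ext (i | i) (j | j) <;> simp [bordered, Matrix.mul_apply]
  simp [factor]

theorem det_bordered_mul_mul (b a : R) (v : ι → R) (B : Matrix ι ι R) :
    (bordered (b * (b * a)) (b • v) B).det = b * (b * (bordered a v B).det) := by
  have factor : fromBlocks (of fun _ _ => b * a) (replicateRow Unit v)
      (b • replicateCol Unit v) B = bordered a v B * fromBlocks (of fun _ _ => b) 0 0 1 := by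
    simp only [bordered, fromBlocks_multiply, Matrix.mul_zero, Matrix.mul_one, add_zero, zero_add]
    ext (i | i) (j | j) <;> simp [Matrix.mul_apply, mul_comm]
  rw [det_bordered_mul, factor, det_mul]
  simp [mul_comm]

theorem det_bordered_of (a b c : R) :
    (bordered a (fun _ : Unit => b) (of fun _ _ => c)).det = a * c - b * b := by
  rw [← det_submatrix_equiv_self (finTwoEquiv.trans Equiv.boolEquivPUnitSumPUnit), det_fin_two]
  rfl

theorem det_bordered_bordered (a c : R) (v : Unit ⊕ ι → R) (w : ι → R) (C : Matrix ι ι R) :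
    (bordered a v (bordered c w C)).det =
      (fromBlocks (bordered a (fun _ : Unit => v (.inl ())) (of fun _ _ => c))
        (of (Sum.elim (fun _ => v ∘ .inr) fun _ => w))
        (of (Sum.elim (fun _ => v ∘ .inr) fun _ => w))ᵀ C).det := by
  rw [← det_submatrix_equiv_self (Equiv.sumAssoc Unit Unit ι)]
  congr 1
  ext ((i | i) | i) ((j | j) | j) <;> rfl

variable [Finite R] [Fintype κ] [DecidableEq κ]

theorem expect_comp_det_fromBlocks (f : R → ℝ) {M : Matrix κ κ R} (hM : IsUnit M.det)
    (N : Matrix κ ι R) (N' : Matrix ι κ R) (h : (N' * M⁻¹ * N).IsSymm) :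
    𝔼 C : symmMatrices ι R, f (fromBlocks M N N' C.1).det =
      𝔼 C : symmMatrices ι R, f (M.det * C.1.det) := by
  have := M.invertibleOfIsUnitDet hM
  refine Fintype.expect_equiv (Equiv.subRight (⟨_, h⟩ : symmMatrices ι R)) _ _ fun C => ?_
  rw [det_fromBlocks₁₁, invOf_eq_nonsing_inv]
  rfl

/-- The expectation of `f (det A)` for a uniformly random symmetric `ι × ι` matrix `A` over a
finite ring. -/
noncomputable def symmDetExpect (ι : Type*) [Fintype ι] [DecidableEq ι] (f : R → ℝ) : ℝ :=
  𝔼 A : symmMatrices ι R, f A.1.det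

theorem symmDetExpect_congr (h : Fintype.card ι = Fintype.card κ) (f : R → ℝ) :
    symmDetExpect ι f = symmDetExpect κ f := by
  simp only [symmDetExpect, det_submatrix_equiv_self,
    ← expect_symmMatrices_submatrix (Fintype.equivOfCardEq h.symm) fun A => f A.det]

end Det

theorem symmDetExpect_comp_of_surjective [Fintype ι] [DecidableEq ι] [CommRing R] [Finite R]
    {S : Type*} [CommRing S] [Finite S] (φ : R →+* S) (hφ : Function.Surjective φ) (f : S → ℝ) :
    symmDetExpect ι (fun x => f (φ x)) = symmDetExpect ι f := by
  let Φ : symmMatrices ι R →+ symmMatrices ι S :=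
    (φ.toAddMonoidHom.mapMatrix.comp (symmMatrices ι R).subtype).codRestrict _
      fun A => A.2.map φ
  have hΦ : Function.Surjective Φ := fun B =>
    ⟨⟨B.1.map (Function.surjInv hφ), B.2.map _⟩,
      Subtype.ext (Matrix.ext fun i j => Function.surjInv_eq hφ _)⟩
  simp only [symmDetExpect, φ.map_det]
  exact expect_comp_addMonoidHom_of_surjective Φ hΦ fun A => f A.1.det

end SymmetricMatrices

section LocalRing

variable {R : Type*} [CommRing R] [IsLocalRing R] {π : R}

theorem isUnit_sub_mul_self {a b : R} (ha : ¬IsUnit a) (hb : IsUnit b) (c : R) :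
    IsUnit (a * c - b * b) := by
  by_contra h
  have hsq := (maximalIdeal R).sub_mem ((maximalIdeal R).mul_mem_right c ha) h
  rw [sub_sub_cancel] at hsq
  exact hsq (hb.mul hb)

theorem mem_range_mulLeft_iff_not_isUnit (hπ : maximalIdeal R = Ideal.span {π}) {a : R} :
    a ∈ (AddMonoidHom.mulLeft π).range ↔ ¬IsUnit a := by
  rw [← mem_nonunits_iff, ← mem_maximalIdeal, hπ, Ideal.mem_span_singleton']
  exact exists_congr fun x => by rw [AddMonoidHom.coe_mulLeft, mul_comm]

theorem index_range_mulLeft (hπ : maximalIdeal R = Ideal.span {π}) :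
    (AddMonoidHom.mulLeft π).range.index = Nat.card (ResidueField R) := by
  have : (AddMonoidHom.mulLeft π).range = (maximalIdeal R).toAddSubgroup := by
    ext a
    exact mem_range_mulLeft_iff_not_isUnit hπ
  rw [this]
  rfl

variable [Fintype R] {q : ℝ} {f : R → ℝ}

theorem expect_eq_of_const_on_units (hπ : maximalIdeal R = Ideal.span {π})
    (hq : q = 1 / Nat.card (ResidueField R)) {s : ℝ} (hf : ∀ a, IsUnit a → f a = s) :
    𝔼 a, f a = (1 - q) * s + q * 𝔼 a, f (π * a) := by
  rw [hq, ← index_range_mulLeft hπ]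
  refine expect_eq_of_const_off_range (AddMonoidHom.mulLeft π) f s fun a ha => hf a ?_
  rwa [mem_range_mulLeft_iff_not_isUnit hπ, not_not] at ha

theorem expect_eq_of_const_on_unit_entry {ι : Type*} [Fintype ι] [DecidableEq ι]
    (hπ : maximalIdeal R = Ideal.span {π}) (hq : q = 1 / Nat.card (ResidueField R))
    {g : (ι → R) → ℝ} {s : ℝ} (hg : ∀ v i, IsUnit (v i) → g v = s) :
    𝔼 v, g v = (1 - q ^ Fintype.card ι) * s + q ^ Fintype.card ι * 𝔼 v, g (π • v) := by
  have hrange := range_compLeft (AddMonoidHom.mulLeft π) ι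
  have hindex : 1 / (((AddMonoidHom.mulLeft π).compLeft ι).range.index : ℝ) =
      q ^ Fintype.card ι := by
    rw [hrange, AddSubgroup.index_pi, hq, ← index_range_mulLeft hπ]
    simp
  rw [← hindex]
  refine expect_eq_of_const_off_range ((AddMonoidHom.mulLeft π).compLeft ι) g s fun v hv => ?_
  simp only [hrange, AddSubgroup.mem_pi, Set.mem_univ, true_imp_iff, not_forall,
    mem_range_mulLeft_iff_not_isUnit hπ, not_not] at hv
  exact hv.elim (hg v)

end LocalRing

section Schur

variable {ι R : Type*} [Fintype ι] [DecidableEq ι] [CommRing R] [Finite R] {f : R → ℝ}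

theorem expect_det_bordered_of_isUnit (hf : ∀ u x, IsUnit u → f (u * x) = f x) {a : R}
    (ha : IsUnit a) (v : ι → R) :
    𝔼 B : symmMatrices ι R, f (bordered a v B).det = symmDetExpect ι f := by
  have hdet : IsUnit (of fun _ _ : Unit => a).det := by simpa using ha
  have hsymm : (of fun _ _ : Unit => a).IsSymm := by ext; rfl
  simp only [bordered, ← transpose_replicateRow]
  rw [expect_comp_det_fromBlocks f hdet _ _ (isSymm_transpose_mul_inv_mul hsymm _)]
  simp only [hf _ _ hdet, symmDetExpect]

theorem expect_det_bordered_mul_of_isUnit (hf : ∀ u x, IsUnit u → f (u * x) = f x) (b : R) {a : R}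
    (ha : IsUnit a) (v : ι → R) :
    𝔼 B : symmMatrices ι R, f (bordered (b * a) (b • v) B).det =
      symmDetExpect ι fun x => f (b * x) := by
  have hdet : IsUnit (of fun _ _ : Unit => a).det := by simpa using ha
  have hsymm : (of fun _ _ : Unit => a).IsSymm := by ext; rfl
  simp only [det_bordered_mul, ← transpose_replicateRow]
  rw [expect_comp_det_fromBlocks (fun x => f (b * x)) hdet]
  · simp only [mul_left_comm b, hf _ _ hdet, symmDetExpect]
  · simpa only [Matrix.smul_mul] using (isSymm_transpose_mul_inv_mul hsymm _).smul b

theorem expect_det_bordered_of_isUnit_inl [IsLocalRing R]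
    (hf : ∀ u x, IsUnit u → f (u * x) = f x) {a : R} (ha : ¬IsUnit a) {v : Unit ⊕ ι → R}
    (hv : IsUnit (v (.inl ()))) :
    𝔼 B : symmMatrices (Unit ⊕ ι) R, f (bordered a v B).det = symmDetExpect ι f := by
  have := Fintype.ofFinite R
  have hcorner (c : R) :
      IsUnit (bordered a (fun _ : Unit => v (.inl ())) (of fun _ _ => c)).det := by
    rw [det_bordered_of]
    exact isUnit_sub_mul_self ha hv c
  have hschur (c : R) (w : ι → R) :
      𝔼 C : symmMatrices ι R, f (bordered a v (bordered c w C)).det = symmDetExpect ι f := by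
    simp only [det_bordered_bordered]
    rw [expect_comp_det_fromBlocks f (hcorner c) _ _
      (isSymm_transpose_mul_inv_mul (bordered_isSymm _ _ (by ext; rfl)) _)]
    simp only [hf _ _ (hcorner c), symmDetExpect]
  rw [expect_symmMatrices_bordered fun B => f (bordered a v B).det]
  simp only [hschur, Fintype.expect_const]

theorem expect_det_bordered_of_isUnit_entry [IsLocalRing R]
    (hf : ∀ u x, IsUnit u → f (u * x) = f x) {a : R} (ha : ¬IsUnit a) {v : ι → R} {i : ι}
    (hv : IsUnit (v i)) :
    𝔼 B : symmMatrices ι R, f (bordered a v B).det = symmDetExpect {j // ¬j = i} f := by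
  let e : Unit ⊕ {j // ¬j = i} ≃ ι :=
    ((Equiv.ofUnique Unit {j // j = i}).sumCongr (Equiv.refl _)).trans (Equiv.sumCompl (· = i))
  rw [← expect_det_bordered_of_isUnit_inl hf ha (v := v ∘ e) hv,
    ← expect_symmMatrices_submatrix e.symm fun B => f (bordered a v B).det]
  simp only [bordered_submatrix, det_submatrix_equiv_self, Equiv.symm_symm]

end Schur

section Recurrence

variable {R : Type*} [CommRing R] [IsLocalRing R] {π : R} {q : ℝ} {f : R → ℝ}

theorem expect_det_bordered_of_not_isUnit [Fintype R] (hπ : maximalIdeal R = Ideal.span {π})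
    (hq : q = 1 / Nat.card (ResidueField R)) (hf : ∀ u x, IsUnit u → f (u * x) = f x)
    {a : R} (ha : ¬IsUnit a) (n : ℕ) :
    𝔼 v : Fin n → R, 𝔼 B : symmMatrices (Fin n) R, f (bordered a v B).det =
      (1 - q ^ n) * symmDetExpect (Fin (n - 1)) f +
        q ^ n * 𝔼 v : Fin n → R, 𝔼 B : symmMatrices (Fin n) R, f (bordered a (π • v) B).det := by
  rw [expect_eq_of_const_on_unit_entry hπ hq (s := symmDetExpect (Fin (n - 1)) f), Fintype.card_fin]
  intro v i hv
  rw [expect_det_bordered_of_isUnit_entry hf ha hv]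
  exact symmDetExpect_congr (by simp [Fintype.card_subtype_compl]) f

theorem symmDetExpect_fin_succ [Finite R] (hπ : maximalIdeal R = Ideal.span {π})
    (hq : q = 1 / Nat.card (ResidueField R)) (hf : ∀ u x, IsUnit u → f (u * x) = f x) (n : ℕ) :
    symmDetExpect (Fin (n + 1)) f =
      (1 - q) * symmDetExpect (Fin n) f + q * (1 - q ^ n) * symmDetExpect (Fin (n - 1)) f +
        q ^ (n + 1) * (1 - q) * symmDetExpect (Fin n) (fun x => f (π * x)) +
        q ^ (n + 2) * symmDetExpect (Fin (n + 1)) (fun x => f (π * (π * x))) := by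
  have := Fintype.ofFinite R
  have hcongr (g : R → ℝ) : symmDetExpect (Fin (n + 1)) g =
      𝔼 a, 𝔼 v : Fin n → R, 𝔼 B : symmMatrices (Fin n) R, g (bordered a v B).det := by
    rw [symmDetExpect_congr (κ := Unit ⊕ Fin n) (by simp [add_comm]) g]
    exact expect_symmMatrices_bordered fun A => g A.det
  have hπ_nonunit (a : R) : ¬IsUnit (π * a) := (mem_range_mulLeft_iff_not_isUnit hπ).1 ⟨a, rfl⟩
  have hcorner : 𝔼 a, 𝔼 v : Fin n → R, 𝔼 B : symmMatrices (Fin n) R,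
      f (bordered (π * a) (π • v) B).det =
        (1 - q) * symmDetExpect (Fin n) (fun x => f (π * x)) +
          q * symmDetExpect (Fin (n + 1)) (fun x => f (π * (π * x))) := by
    rw [expect_eq_of_const_on_units hπ hq (s := symmDetExpect (Fin n) fun x => f (π * x)), hcongr]
    · simp only [det_bordered_mul_mul]
    · intro a ha
      simp only [expect_det_bordered_mul_of_isUnit hf π ha, Fintype.expect_const]
  rw [hcongr, expect_eq_of_const_on_units hπ hq (s := symmDetExpect (Fin n) f)]
  · simp only [expect_det_bordered_of_not_isUnit hπ hq hf (hπ_nonunit _), expect_add_distrib,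
      ← mul_expect, hcorner, Fintype.expect_const]
    ring
  · intro a ha
    simp only [expect_det_bordered_of_isUnit hf ha, Fintype.expect_const]

end Recurrence

section Elimination

variable {K : Type*} [CommRing K]

theorem eq_zero_of_eq_mul_shift {f : ℕ → K} {c : K} {j N : ℕ} (hj : 0 < j) (h0 : f 0 = 0)
    (hf : ∀ m ≤ N, f m = c * f (m - j)) : ∀ m ≤ N, f m = 0 := by
  intro m
  induction m using Nat.strong_induction_on with
  | _ m ih =>
    intro hm
    rcases m.eq_zero_or_pos with rfl | hpos
    · exact h0
    · rw [hf m hm, ih (m - j) (by omega) (by omega), mul_zero]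

/- Truncated subtraction is harmless in `hP`: `P (n - 1) m` has weight zero at `n = 0`, and for
small `m` the terms at `m - 1` and `m - 2` are values `P _ 0 = 0`. -/
variable {P : ℕ → ℕ → K} {q : K} {N : ℕ} (h0 : ∀ n, P n 0 = 0)
  (hP : ∀ n, ∀ m ≤ N, P (n + 1) m = (1 - q) * P n m + q * (1 - q ^ n) * P (n - 1) m +
    q ^ (n + 1) * (1 - q) * P n (m - 1) + q ^ (n + 2) * P (n + 1) (m - 2))

include hP

theorem sub_shift_two_eq_sub_shift_one {n : ℕ} (hn : ∀ m ≤ N,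
      (1 - q ^ (n + 1)) * P n m = P (n + 1) m - q ^ (n + 1) * P (n + 1) (m - 1)) :
    ∀ m ≤ N, P (n + 2) m - q ^ (n + 3) * P (n + 2) (m - 2) =
      P (n + 1) m - q ^ (n + 3) * P (n + 1) (m - 1) := by
  intro m hm
  have h := hP (n + 1) m hm
  simp only [Nat.add_sub_cancel, add_assoc, Nat.reduceAdd] at h
  linear_combination h + q * hn m hm

include h0

theorem three_term_of_sub_shift_eq {n : ℕ}
    (hn : ∀ m ≤ N, P (n + 2) m - q ^ (n + 3) * P (n + 2) (m - 2) =
      P (n + 1) m - q ^ (n + 3) * P (n + 1) (m - 1)) :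
    ∀ m ≤ N, P (n + 3) m = (1 - q ^ (n + 3)) * P (n + 1) m + q ^ (n + 3) * P (n + 3) (m - 2) := by
  suffices h : ∀ m ≤ N,
      P (n + 3) m - (1 - q ^ (n + 3)) * P (n + 1) m - q ^ (n + 3) * P (n + 3) (m - 2) = 0 from
    fun m hm => by linear_combination h m hm
  refine eq_zero_of_eq_mul_shift (c := q ^ (n + 4)) two_pos (by simp [h0]) fun m hm => ?_
  have hrec := hP (n + 2) m hm
  have hrec_sub_two := hP (n + 2) (m - 2) (by omega)
  have hn_self := hn m hm
  have hn_sub_one := hn (m - 1) (by omega)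
  simp only [Nat.reduceSubDiff, add_assoc, Nat.reduceAdd, Nat.sub_sub] at *
  linear_combination hrec - q ^ (n + 3) * hrec_sub_two + (1 - q) * hn_self +
    q ^ (n + 3) * (1 - q) * hn_sub_one

theorem one_sub_pow_mul_even_eq_sub_shift (k : ℕ) : ∀ m ≤ N, (1 - q ^ (2 * k + 1)) * P (2 * k) m =
    P (2 * k + 1) m - q ^ (2 * k + 1) * P (2 * k + 1) (m - 1) := by
  suffices h : ∀ m ≤ N, (1 - q ^ (2 * k + 1)) * P (2 * k) m - P (2 * k + 1) m +
      q ^ (2 * k + 1) * P (2 * k + 1) (m - 1) = 0 from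
    fun m hm => by linear_combination h m hm
  induction k with
  | zero =>
    refine eq_zero_of_eq_mul_shift (c := -q) one_pos (by simp [h0]) fun m hm => ?_
    have h := hP 0 m hm
    simp only [mul_zero, zero_add, pow_zero, sub_self, pow_one, Nat.sub_sub, Nat.reduceAdd] at *
    linear_combination -h
  | succ k ih =>
    have heven := sub_shift_two_eq_sub_shift_one hP (n := 2 * k) fun m hm => by
      linear_combination ih m hm
    have hodd := three_term_of_sub_shift_eq h0 hP heven
    refine eq_zero_of_eq_mul_shift (c := q ^ (2 * k + 3)) two_pos (by simp [h0]) fun m hm => ?_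
    have heven_self := heven m hm
    have hodd_self := hodd m hm
    have hodd_sub_one := hodd (m - 1) (by omega)
    simp only [mul_add, mul_one, add_assoc, Nat.reduceAdd, Nat.sub_sub] at *
    linear_combination (1 - q ^ (2 * k + 3)) * heven_self - hodd_self +
      q ^ (2 * k + 3) * hodd_sub_one

theorem three_term_of_odd {n : ℕ} (hn : Odd n) : ∀ m ≤ N,
    P (n + 2) m = (1 - q ^ (n + 2)) * P n m + q ^ (n + 2) * P (n + 2) (m - 2) := by
  obtain ⟨k, rfl⟩ := hn
  exact three_term_of_sub_shift_eq h0 hP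
    (sub_shift_two_eq_sub_shift_one hP (one_sub_pow_mul_even_eq_sub_shift h0 hP k))

end Elimination

section Divisibility

theorem indicator_one_congr {α β : Type*} {s : Set α} {t : Set β} {x : α} {y : β}
    (h : x ∈ s ↔ y ∈ t) : s.indicator (1 : α → ℝ) x = t.indicator 1 y := by
  classical
  simp only [Set.indicator_apply, h, Pi.one_apply]

variable {R : Type*} [CommRing R] [IsLocalRing R] {π : R}

theorem pow_dvd_of_mul_eq_zero (hπ : maximalIdeal R = Ideal.span {π}) {k : ℕ} (hk : π ^ k ≠ 0)
    {z : R} (hz : π * z = 0) : π ^ k ∣ z := by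
  induction k with
  | zero => simp
  | succ k ih =>
    obtain ⟨y, rfl⟩ := ih fun h => hk (by rw [pow_succ, h, zero_mul])
    have hy : ¬IsUnit y := fun hy => hk <| by
      rwa [← mul_assoc, ← pow_succ', hy.mul_left_eq_zero] at hz
    rw [← mem_nonunits_iff, ← mem_maximalIdeal, hπ, Ideal.mem_span_singleton] at hy
    exact pow_succ π k ▸ mul_dvd_mul_left _ hy

theorem pow_dvd_mul_iff (hπ : maximalIdeal R = Ideal.span {π}) {m : ℕ} (hm : π ^ (m - 1) ≠ 0)
    (x : R) : π ^ m ∣ π * x ↔ π ^ (m - 1) ∣ x := by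
  cases m with
  | zero => simp
  | succ m =>
    rw [pow_succ']
    refine ⟨fun ⟨y, hy⟩ => ?_, mul_dvd_mul_left π⟩
    have hz : π * (x - π ^ m * y) = 0 := by linear_combination hy
    simpa using dvd_add (pow_dvd_of_mul_eq_zero hπ hm hz) (dvd_mul_right (π ^ m) y)

theorem indicator_not_pow_dvd_comp_mul (hπ : maximalIdeal R = Ideal.span {π}) {m : ℕ}
    (hm : π ^ (m - 1) ≠ 0) :
    (fun x => {y | ¬π ^ m ∣ y}.indicator (1 : R → ℝ) (π * x)) =
      {y | ¬π ^ (m - 1) ∣ y}.indicator 1 :=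
  funext fun x => indicator_one_congr (not_congr (pow_dvd_mul_iff hπ hm x))

end Divisibility

section DeterminantDivisibility

variable {R : Type*} [CommRing R] [Finite R]

/-- The probability that `π ^ m` does not divide the determinant of a uniformly random symmetric
`n × n` matrix over `R`. -/
noncomputable def symmNotDvdProb (n : ℕ) (π : R) (m : ℕ) : ℝ :=
  symmDetExpect (Fin n) ({x : R | ¬π ^ m ∣ x}.indicator 1)

theorem symmNotDvdProb_zero (n : ℕ) (π : R) : symmNotDvdProb n π 0 = 0 := by
  simp [symmNotDvdProb, symmDetExpect]

variable [IsLocalRing R] {π : R} {q : ℝ}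

theorem symmNotDvdProb_succ (hπ : maximalIdeal R = Ideal.span {π})
    (hq : q = 1 / Nat.card (ResidueField R)) (n : ℕ) {m : ℕ} (hm : π ^ (m - 1) ≠ 0) :
    symmNotDvdProb (n + 1) π m =
      (1 - q) * symmNotDvdProb n π m + q * (1 - q ^ n) * symmNotDvdProb (n - 1) π m +
        q ^ (n + 1) * (1 - q) * symmNotDvdProb n π (m - 1) +
        q ^ (n + 2) * symmNotDvdProb (n + 1) π (m - 2) := by
  have hm' : π ^ (m - 1 - 1) ≠ 0 := fun h => hm (pow_eq_zero_of_le (Nat.sub_le _ _) h)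
  have hunit (u x : R) (hu : IsUnit u) :
      {y | ¬π ^ m ∣ y}.indicator (1 : R → ℝ) (u * x) = {y | ¬π ^ m ∣ y}.indicator 1 x :=
    indicator_one_congr (not_congr hu.dvd_mul_left)
  unfold symmNotDvdProb
  rw [symmDetExpect_fin_succ hπ hq hunit, indicator_not_pow_dvd_comp_mul hπ hm,
    ← Nat.sub_sub m 1 1, ← indicator_not_pow_dvd_comp_mul hπ hm']
  simp only [← indicator_not_pow_dvd_comp_mul hπ hm]

theorem Psym_odd_three_term_recurrence_general (hπ : maximalIdeal R = Ideal.span {π})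
    (hq : q = 1 / Nat.card (ResidueField R)) {n m : ℕ} (hn : Odd n) (hm : π ^ (m + 1) ≠ 0) :
    symmNotDvdProb (n + 2) π (m + 2) =
      (1 - q ^ (n + 2)) * symmNotDvdProb n π (m + 2) +
        q ^ (n + 2) * symmNotDvdProb (n + 2) π m := by
  have hrec (n l : ℕ) (hl : l ≤ m + 2) := symmNotDvdProb_succ hπ hq n (m := l)
    fun h => hm (pow_eq_zero_of_le (by omega) h)
  exact three_term_of_odd (fun n => symmNotDvdProb_zero n π) hrec hn (m + 2) le_rfl

end DeterminantDivisibility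

section ZMod

theorem castHom_eq_zero_iff_dvd {m n : ℕ} (h : m ∣ n) (x : ZMod n) :
    ZMod.castHom h (ZMod m) x = 0 ↔ (m : ZMod n) ∣ x := by
  refine ⟨fun hx => ?_, fun hx => by simpa using map_dvd (ZMod.castHom h (ZMod m)) hx⟩
  obtain ⟨k, rfl⟩ := ZMod.intCast_surjective x
  rw [map_intCast, ZMod.intCast_zmod_eq_zero_iff_dvd] at hx
  simpa using map_dvd (Int.castRingHom (ZMod n)) hx

theorem Psym_eq_symmDetExpect (n m : ℕ) [NeZero m] :
    Psym n m = symmDetExpect (Fin n) ({x : ZMod m | x ≠ 0}.indicator 1) := by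
  classical
  have hcount : Nsym n m = #{A : symmMatrices (Fin n) (ZMod m) | A.1.det ≠ 0} := by
    rw [Nsym, ← Fintype.card_subtype, ← Nat.card_eq_fintype_card]
    exact Nat.card_congr (Equiv.subtypeSubtypeEquivSubtypeInter _ _).symm
  simp [Psym, symmDetExpect, Fintype.expect_eq_sum_div_card, hcount, card_symmMatrices_fin,
    Set.indicator_apply, sum_ite]

variable {p : ℕ} [Fact p.Prime] {N : ℕ}

theorem Psym_pow_eq_symmNotDvdProb (n : ℕ) {m : ℕ} (hm : m ≤ N) :
    Psym n (p ^ m) = symmNotDvdProb n (p : ZMod (p ^ N)) m := by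
  rw [Psym_eq_symmDetExpect, ← symmDetExpect_comp_of_surjective _
    (ZMod.castHom_surjective (pow_dvd_pow p hm))]
  refine congrArg _ (funext fun x => indicator_one_congr (not_congr ?_))
  rw [castHom_eq_zero_iff_dvd, Nat.cast_pow]

variable [NeZero N]

instance isLocalRing_zmod_pow : IsLocalRing (ZMod (p ^ N)) :=
  have : Fact (1 < p ^ N) := ⟨Nat.one_lt_pow (NeZero.ne N) (Fact.out : p.Prime).one_lt⟩
  IsLocalRing.of_surjective' _ (ZMod.ringHom_surjective (PadicInt.toZModPow (p := p) N))

theorem ker_castHom_zmod_pow : RingHom.ker (ZMod.castHom (dvd_pow_self p (NeZero.ne N)) (ZMod p)) =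
    maximalIdeal (ZMod (p ^ N)) :=
  ker_eq_maximalIdeal _ (ZMod.castHom_surjective _)

theorem maximalIdeal_zmod_pow : maximalIdeal (ZMod (p ^ N)) = Ideal.span {(p : ZMod (p ^ N))} := by
  ext x
  rw [← ker_castHom_zmod_pow, RingHom.mem_ker, castHom_eq_zero_iff_dvd, Ideal.mem_span_singleton]

theorem card_residueField_zmod_pow : Nat.card (ResidueField (ZMod (p ^ N))) = p := by
  rw [ResidueField, ← ker_castHom_zmod_pow, Nat.card_congr
    (RingHom.quotientKerEquivOfSurjective (ZMod.castHom_surjective _)).toEquiv, Nat.card_zmod]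

end ZMod

theorem Psym_odd_three_term_recurrence (p : ℕ) (hp : p.Prime) (q : ℝ)
    (hq : q = 1 / p) (n μ : ℕ) (hn : 3 ≤ n) (hodd : Odd n) (hμ : 2 ≤ μ) :
    Psym n (p ^ μ) =
      (1 - q ^ n) * Psym (n - 2) (p ^ μ) + q ^ n * Psym n (p ^ (μ - 2)) := by
  have : Fact p.Prime := ⟨hp⟩
  obtain ⟨n, rfl⟩ := Nat.exists_eq_add_of_le' ((Nat.le_succ 2).trans hn)
  obtain ⟨m, rfl⟩ := Nat.exists_eq_add_of_le' hμ
  have hpow : (p : ZMod (p ^ (m + 2))) ^ (m + 1) ≠ 0 := by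
    rw [← Nat.cast_pow, Ne, ZMod.natCast_eq_zero_iff, Nat.pow_dvd_pow_iff_le_right hp.one_lt]
    omega
  rw [Nat.add_sub_cancel, Nat.add_sub_cancel, Psym_pow_eq_symmNotDvdProb (N := m + 2) _ le_rfl,
    Psym_pow_eq_symmNotDvdProb (N := m + 2) _ le_rfl,
    Psym_pow_eq_symmNotDvdProb (N := m + 2) _ (by omega)]
  exact Psym_odd_three_term_recurrence_general maximalIdeal_zmod_pow
    (by rw [hq, card_residueField_zmod_pow]) (by simpa [parity_simps] using hodd) hpow
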